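/- Let D ⊂ ℝ³ be a nonempty bounded open convex set and ℓ > 0. Then the four-dimensional Lebesgue measure of the set of positioned segments contained in D, namely of {(p,θ,t,h) ∈ ℝ × [0,2π) × ℝ × ℝ : ∀ s ∈ [h, h+ℓ], γ_{p,θ,t}(s) ∈ D}, equals ∫_{θ∈[0,2π)} ∫_{p∈ℝ} ∫_{t∈ℝ} max(σ(p,θ,t) − ℓ, 0) dt dp dθ, where σ(p,θ,t) is the chord length of γ_{p,θ,t} in D. -/

import Mathlib

open MeasureTheory Real Set

noncomputable section

/-- The oriented horizontal line `γ_{p,θ,t}` in the Heisenberg group `H₁ = ℝ³`,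
parametrized by horizontal arclength `s`. -/
def hLine (p θ t s : ℝ) : ℝ × ℝ × ℝ :=
  (p * Real.cos θ + s * Real.sin θ, p * Real.sin θ - s * Real.cos θ, t + s * p)

lemma chord_aux (A : Set ℝ) (ho : IsOpen A) (hc : A.OrdConnected)
    (hb : Bornology.IsBounded A) (ℓ : ℝ) (hℓ : 0 < ℓ) :
    volume {h : ℝ | h ∈ A ∧ h + ℓ ∈ A} = volume A - ENNReal.ofReal ℓ := by
  rcases A.eq_empty_or_nonempty with rfl | hn
  · simp
  have hbb := hb.bddBelow
  have hba := hb.bddAbove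
  have hA : A = Ioo (sInf A) (sSup A) := by
    apply Subset.antisymm
    · intro x hx
      obtain ⟨ε, hε, hball⟩ := Metric.isOpen_iff.1 ho x hx
      have h1 : x - ε / 2 ∈ A := hball (by
        rw [Metric.mem_ball, Real.dist_eq, abs_lt]; constructor <;> linarith)
      have h2 : x + ε / 2 ∈ A := hball (by
        rw [Metric.mem_ball, Real.dist_eq, abs_lt]; constructor <;> linarith)
      have h3 := csInf_le hbb h1
      have h4 := le_csSup hba h2
      constructor <;> linarith
    · intro x hx
      obtain ⟨a, ha, hax⟩ := exists_lt_of_csInf_lt hn hx.1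
      obtain ⟨b, hb', hxb⟩ := exists_lt_of_lt_csSup hn hx.2
      exact hc.out ha hb' ⟨hax.le, hxb.le⟩
  generalize sInf A = a at hA
  generalize sSup A = b at hA
  subst hA
  have : {h : ℝ | h ∈ Ioo a b ∧ h + ℓ ∈ Ioo a b} = Ioo a (b - ℓ) := by
    ext h
    simp only [mem_setOf_eq, mem_Ioo]
    constructor
    · rintro ⟨⟨h1, h2⟩, h3, h4⟩; constructor <;> linarith
    · rintro ⟨h1, h2⟩; refine ⟨⟨?_, ?_⟩, ?_, ?_⟩ <;> linarith
  rw [this, Real.volume_Ioo, Real.volume_Ioo, ← ENNReal.ofReal_sub _ hℓ.le]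
  congr 1; ring

lemma hLine_segment (D : Set (ℝ × ℝ × ℝ)) (hconv : Convex ℝ D) (p θ t : ℝ) :
    {s : ℝ | hLine p θ t s ∈ D}.OrdConnected := by
  apply Convex.ordConnected
  intro x hx y hy a b ha hb hab
  have := hconv hx hy ha hb hab
  simp only [mem_setOf_eq] at *
  convert this using 1
  obtain rfl : b = 1 - a := by linarith
  simp only [hLine, smul_eq_mul, Prod.smul_mk, Prod.mk_add_mk, Prod.mk.injEq]
  refine ⟨by ring, by ring, by ring⟩

lemma hLine_continuous : Continuous fun q : ℝ × ℝ × ℝ × ℝ => hLine q.1 q.2.1 q.2.2.1 q.2.2.2 := by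
  unfold hLine
  fun_prop

lemma hLine_bounded (D : Set (ℝ × ℝ × ℝ)) (hbdd : Bornology.IsBounded D) (p θ t : ℝ) :
    Bornology.IsBounded {s : ℝ | hLine p θ t s ∈ D} := by
  obtain ⟨C, hC⟩ := hbdd.exists_norm_le
  refine (isBounded_iff_forall_norm_le).2 ⟨C + C, fun s hs => ?_⟩
  have h := hC _ hs
  have h1 := (norm_fst_le _).trans h
  have h2 := ((norm_fst_le _).trans (norm_snd_le _)).trans h
  simp only [hLine, Real.norm_eq_abs] at h1 h2 ⊢
  have e : s = (p * Real.cos θ + s * Real.sin θ) * Real.sin θ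
      - (p * Real.sin θ - s * Real.cos θ) * Real.cos θ := by
    linear_combination (-s) * Real.sin_sq_add_cos_sq θ
  have h0 : 0 ≤ C := (abs_nonneg _).trans h1
  calc |s| = |(p * Real.cos θ + s * Real.sin θ) * Real.sin θ
      - (p * Real.sin θ - s * Real.cos θ) * Real.cos θ| := by rw [← e]
    _ ≤ |(p * Real.cos θ + s * Real.sin θ) * Real.sin θ|
      + |(p * Real.sin θ - s * Real.cos θ) * Real.cos θ| := abs_sub _ _
    _ ≤ C * 1 + C * 1 := by
      rw [abs_mul, abs_mul]
      gcongr
      · exact Real.abs_sin_le_one θ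
      · exact Real.abs_cos_le_one θ
    _ = C + C := by ring

/-- Kinematic measure of positioned segments of length `ℓ` contained in a nonempty
bounded open convex set `D ⊂ ℝ³`: the 4-dimensional Lebesgue measure (density
`dp dθ dt dh`, `θ ∈ [0,2π)`) of `{(p,θ,t,h) : ∀ s ∈ [h,h+ℓ], γ_{p,θ,t}(s) ∈ D}`
is the integral over all horizontal lines of `max(σ(p,θ,t) − ℓ, 0)`, where
`σ(p,θ,t) = Leb¹{s : γ_{p,θ,t}(s) ∈ D}` is the chord length (here `x - y` is
`ℝ≥0∞`-truncated subtraction, i.e. `max(x − y, 0)`). -/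
theorem measure_segments_inside_convex
    (D : Set (ℝ × ℝ × ℝ)) (hne : D.Nonempty) (hconv : Convex ℝ D)
    (hbdd : Bornology.IsBounded D) (hopen : IsOpen D)
    (ℓ : ℝ) (hℓ : 0 < ℓ) :
    volume {q : ℝ × ℝ × ℝ × ℝ | q.2.1 ∈ Set.Ico (0 : ℝ) (2 * π) ∧
        ∀ s ∈ Set.Icc q.2.2.2 (q.2.2.2 + ℓ), hLine q.1 q.2.1 q.2.2.1 s ∈ D} =
      ∫⁻ θ in Set.Ico (0 : ℝ) (2 * π), ∫⁻ p : ℝ, ∫⁻ t : ℝ,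
        (volume {s : ℝ | hLine p θ t s ∈ D} - ENNReal.ofReal ℓ) := by
  set T : Set (ℝ × ℝ × ℝ × ℝ) := {q | hLine q.1 q.2.1 q.2.2.1 q.2.2.2 ∈ D ∧
    hLine q.1 q.2.1 q.2.2.1 (q.2.2.2 + ℓ) ∈ D} with hT
  have hTm : MeasurableSet T := by
    apply IsOpen.measurableSet
    apply IsOpen.inter
    · exact hopen.preimage hLine_continuous
    · refine hopen.preimage (hLine_continuous.comp
        (g := fun q : ℝ × ℝ × ℝ × ℝ => hLine q.1 q.2.1 q.2.2.1 q.2.2.2)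
        (f := fun q : ℝ × ℝ × ℝ × ℝ => (q.1, q.2.1, q.2.2.1, q.2.2.2 + ℓ)) ?_)
      fun_prop
  have hS : {q : ℝ × ℝ × ℝ × ℝ | q.2.1 ∈ Set.Ico (0 : ℝ) (2 * π) ∧
        ∀ s ∈ Set.Icc q.2.2.2 (q.2.2.2 + ℓ), hLine q.1 q.2.1 q.2.2.1 s ∈ D} =
      {q | q.2.1 ∈ Set.Ico (0 : ℝ) (2 * π)} ∩ T := by
    ext q
    simp only [mem_setOf_eq, mem_inter_iff, hT]
    refine and_congr_right fun _ => ⟨fun h => ⟨h _ ⟨le_rfl, by linarith⟩, h _ ⟨by linarith, le_rfl⟩⟩,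
      fun h s hs => (hLine_segment D hconv q.1 q.2.1 q.2.2.1).out h.1 h.2 hs⟩
  have hIm : MeasurableSet {q : ℝ × ℝ × ℝ × ℝ | q.2.1 ∈ Set.Ico (0 : ℝ) (2 * π)} :=
    (measurable_fst.comp measurable_snd) measurableSet_Ico
  have hF : ∀ p θ t : ℝ, volume {h : ℝ | (p, θ, t, h) ∈ T} =
      volume {s : ℝ | hLine p θ t s ∈ D} - ENNReal.ofReal ℓ := by
    intro p θ t
    refine chord_aux _ ?_ (hLine_segment D hconv p θ t) (hLine_bounded D hbdd p θ t) ℓ hℓ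
    exact hopen.preimage (hLine_continuous.comp
        (g := fun q : ℝ × ℝ × ℝ × ℝ => hLine q.1 q.2.1 q.2.2.1 q.2.2.2)
        (f := fun s : ℝ => (p, θ, t, s)) (by fun_prop))
  have hFm : Measurable fun x : (ℝ × ℝ) × ℝ => volume {h : ℝ | (x.1.1, x.1.2, x.2, h) ∈ T} := by
    have : MeasurableSet {y : ((ℝ × ℝ) × ℝ) × ℝ | (y.1.1.1, y.1.1.2, y.1.2, y.2) ∈ T} := by
      have hm : Measurable fun y : ((ℝ × ℝ) × ℝ) × ℝ => (y.1.1.1, y.1.1.2, y.1.2, y.2) := by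
        fun_prop
      exact hm hTm
    exact measurable_measure_prodMk_left this
  have hGm : Measurable fun x : ℝ × ℝ => ∫⁻ t, volume {h : ℝ | (x.1, x.2, t, h) ∈ T} :=
    hFm.lintegral_prod_right'
  simp_rw [← hF]
  rw [hS, Measure.volume_eq_prod, Measure.prod_apply (hIm.inter hTm)]
  rw [← lintegral_lintegral_swap (μ := volume) (ν := volume.restrict (Set.Ico (0 : ℝ) (2 * π)))
    (f := fun p θ => ∫⁻ t, volume {h : ℝ | (p, θ, t, h) ∈ T}) hGm.aemeasurable]
  refine lintegral_congr fun p => ?_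
  have hp : MeasurableSet (Prod.mk p ⁻¹' ({q : ℝ × ℝ × ℝ × ℝ | q.2.1 ∈ Set.Ico (0 : ℝ) (2 * π)} ∩ T)) :=
    measurable_prodMk_left (hIm.inter hTm)
  rw [Measure.volume_eq_prod, Measure.prod_apply hp, ← lintegral_indicator measurableSet_Ico]
  refine lintegral_congr fun θ => ?_
  rw [Measure.volume_eq_prod, Measure.prod_apply (measurable_prodMk_left hp)]
  by_cases hθ : θ ∈ Set.Ico (0 : ℝ) (2 * π)
  · rw [indicator_of_mem hθ]
    refine lintegral_congr fun t => ?_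
    congr 1
    ext h
    simp only [mem_preimage, mem_inter_iff, mem_setOf_eq]
    exact ⟨fun h => h.2, fun h => ⟨hθ, h⟩⟩
  · rw [indicator_of_notMem hθ]
    rw [lintegral_eq_zero_of_ae_eq_zero]
    refine Filter.Eventually.of_forall fun t => ?_
    have : (Prod.mk t ⁻¹' (Prod.mk θ ⁻¹' (Prod.mk p ⁻¹'
      ({q : ℝ × ℝ × ℝ × ℝ | q.2.1 ∈ Set.Ico (0 : ℝ) (2 * π)} ∩ T)))) = ∅ := by
      ext h
      simp only [mem_preimage, mem_inter_iff, mem_setOf_eq, mem_empty_iff_false, iff_false]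
      exact fun h => hθ h.1
    simp only [this, measure_empty, Pi.zero_apply]
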